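/- For every p₀ ∈ (0, √2) there is a unique q̃ ∈ (0, 1) with g(q̃) = p₀²/2, and the half-period satisfies 𝒯(p₀)/2 = 2 ∫₀^{q̃} dq / √(p₀² − 2 g(q)). -/

import Mathlib

open Real Set Filter MeasureTheory
open scoped Topology

/-- The potential `g` from the Hamiltonian `H(x,p) = p²/2 + g(x)`. -/
noncomputable def g (x : ℝ) : ℝ := if |x| ≤ 1 then 1 - (1 - x ^ 2) ^ 4 else 1

/-- The derivative of `g`. -/
noncomputable def g' (x : ℝ) : ℝ := if |x| ≤ 1 then 8 * x * (1 - x ^ 2) ^ 3 else 0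

/-- `(q, p)` is a (global) solution of the Hamiltonian system (HS): `q̇ = p`, `ṗ = -g'(q)`. -/
def IsHSSol (q p : ℝ → ℝ) : Prop :=
  (∀ t : ℝ, HasDerivAt q (p t) t) ∧ (∀ t : ℝ, HasDerivAt p (-(g' (q t))) t)

/-- `F` is the flow of (HS): `F t q₀ p₀ = (q t, p t)` for the solution with data `(q₀, p₀)`. -/
def IsHSFlow (F : ℝ → ℝ → ℝ → ℝ × ℝ) : Prop :=
  ∀ q₀ p₀ : ℝ,
    IsHSSol (fun t => (F t q₀ p₀).1) (fun t => (F t q₀ p₀).2) ∧ F 0 q₀ p₀ = (q₀, p₀)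

/-- The set `([0,∞) × {2}) ∪ ({0} × (0,2])`, codomain of the map `Δ`. -/
def Dset : Set (ℝ × ℝ) := (Ici (0:ℝ) ×ˢ ({2} : Set ℝ)) ∪ ({(0:ℝ)} ×ˢ Ioc (0:ℝ) 2)

/-- `T` is the smallest positive period of `q`. -/
def IsSmallestPeriod (q : ℝ → ℝ) (T : ℝ) : Prop :=
  0 < T ∧ Function.Periodic q T ∧ ∀ T' : ℝ, 0 < T' → Function.Periodic q T' → T ≤ T'

/-- `T` is the period map `𝒯`, assigning to `p₀ ∈ (0, √2)` the smallest positive period of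
the `q`-component of the solution of (HS) with initial datum `(0, p₀)`. -/
def IsPeriodMap (F : ℝ → ℝ → ℝ → ℝ × ℝ) (T : ℝ → ℝ) : Prop :=
  ∀ p₀ ∈ Ioo (0:ℝ) (Real.sqrt 2), IsSmallestPeriod (fun t => (F t 0 p₀).1) (T p₀)

/-- `Δ` associates to `(t,x)` the datum in `Dset` whose orbit stays positive on `(0,t)`
and reaches `x` at time `t`. -/
def IsDeltaMap (F : ℝ → ℝ → ℝ → ℝ × ℝ) (Δ : ℝ → ℝ → ℝ × ℝ) : Prop :=
  ∀ t x : ℝ, 0 < t → 0 < x →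
    Δ t x ∈ Dset ∧ (F t (Δ t x).1 (Δ t x).2).1 = x ∧
      ∀ s ∈ Ioo (0:ℝ) t, 0 < (F s (Δ t x).1 (Δ t x).2).1

/-- The solution `u` of the conservation law built from the flow `F` and the map `Δ`
(extended by `0` at `x = 0`). -/
noncomputable def usol (F : ℝ → ℝ → ℝ → ℝ × ℝ) (Δ : ℝ → ℝ → ℝ × ℝ) (t x : ℝ) : ℝ :=
  if 0 < x then (F t (Δ t x).1 (Δ t x).2).2
  else if x < 0 then -(F t (Δ t (-x)).1 (Δ t (-x)).2).2
  else 0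

lemma aux_max (y : ℝ) : HasDerivAt (fun y : ℝ => (max y 0) ^ 4) (4 * (max y 0) ^ 3) y := by
  rcases lt_trichotomy y 0 with h | h | h
  · have : (fun y : ℝ => (max y 0) ^ 4) =ᶠ[𝓝 y] fun _ => 0 := by
      filter_upwards [Iio_mem_nhds h] with z hz
      simp [max_eq_right (le_of_lt (show z < 0 from hz))]
    rw [max_eq_right h.le]
    simpa using (hasDerivAt_const y (0:ℝ)).congr_of_eventuallyEq this
  · subst h
    have h1 : HasDerivWithinAt (fun y : ℝ => (max y 0) ^ 4) 0 (Iic 0) 0 := by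
      refine (hasDerivWithinAt_const (0:ℝ) (Iic 0) (0:ℝ)).congr ?_ ?_
      · intro z hz
        simp [max_eq_right (show z ≤ 0 from hz)]
      · simp
    have h2 : HasDerivWithinAt (fun y : ℝ => (max y 0) ^ 4) 0 (Ici 0) 0 := by
      have h3 : HasDerivWithinAt (fun y : ℝ => y ^ 4) 0 (Ici 0) 0 := by
        simpa using (hasDerivAt_pow 4 (0:ℝ)).hasDerivWithinAt (s := Ici 0)
      refine h3.congr ?_ ?_
      · intro z hz
        simp [max_eq_left (show 0 ≤ z from hz)]
      · simp
    have := h1.union h2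
    rw [Iic_union_Ici, hasDerivWithinAt_univ] at this
    simpa using this
  · have : (fun y : ℝ => (max y 0) ^ 4) =ᶠ[𝓝 y] fun y => y ^ 4 := by
      filter_upwards [Ioi_mem_nhds h] with z hz
      simp [max_eq_left (le_of_lt (show 0 < z from hz))]
    rw [max_eq_left h.le]
    simpa using (hasDerivAt_pow 4 y).congr_of_eventuallyEq this

lemma g_eq (x : ℝ) : g x = 1 - (max (1 - x ^ 2) 0) ^ 4 := by
  unfold g
  split_ifs with h
  · rw [max_eq_left]
    have := (sq_le_one_iff_abs_le_one x).2 h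
    linarith
  · rw [max_eq_right]
    · norm_num
    · have := mt (sq_le_one_iff_abs_le_one x).1 h
      linarith

lemma g'_eq (x : ℝ) : g' x = 8 * x * (max (1 - x ^ 2) 0) ^ 3 := by
  unfold g'
  split_ifs with h
  · rw [max_eq_left]
    have := (sq_le_one_iff_abs_le_one x).2 h
    linarith
  · rw [max_eq_right]
    · norm_num
    · have := mt (sq_le_one_iff_abs_le_one x).1 h
      linarith

lemma g_deriv (x : ℝ) : HasDerivAt g (g' x) x := by
  have h0 : HasDerivAt (fun x : ℝ => 1 - x ^ 2) (-(2 * x)) x := by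
    simpa using (hasDerivAt_pow 2 x).const_sub 1
  have h1 := ((aux_max (1 - x ^ 2)).comp x h0).const_sub 1
  have : g = fun x => 1 - (max (1 - x ^ 2) 0) ^ 4 := funext g_eq
  rw [this, g'_eq]
  exact h1.congr_deriv (by ring)

lemma energy {q p : ℝ → ℝ} (h : IsHSSol q p) (t : ℝ) :
    p t ^ 2 / 2 + g (q t) = p 0 ^ 2 / 2 + g (q 0) := by
  have hd : ∀ t, HasDerivAt (fun t => p t ^ 2 / 2 + g (q t)) 0 t := by
    intro t
    have h1 := (((h.2 t).pow 2).div_const 2).add ((g_deriv (q t)).comp t (h.1 t))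
    exact h1.congr_deriv (by push_cast; ring)
  exact is_const_of_deriv_eq_zero (fun t => (hd t).differentiableAt) (fun t => (hd t).deriv) t 0

lemma g'_lip : ∃ K : NNReal, LipschitzOnWith K g' (Icc (-1) 1) := by
  have h1 : ContDiff ℝ 1 (fun x : ℝ => 8 * x * (1 - x ^ 2) ^ 3) := by fun_prop
  obtain ⟨K, hK⟩ := (h1.contDiffOn (s := Icc (-1:ℝ) 1)).exists_lipschitzOnWith one_ne_zero
    (convex_Icc _ _) isCompact_Icc
  refine ⟨K, ?_⟩
  intro x hx y hy
  have e : ∀ z ∈ Icc (-1:ℝ) 1, g' z = 8 * z * (1 - z ^ 2) ^ 3 := by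
    intro z hz
    unfold g'
    rw [if_pos (abs_le.2 hz)]
  rw [e x hx, e y hy]
  exact hK hx hy

lemma sol_unique {q p r s : ℝ → ℝ} (h : IsHSSol q p) (k : IsHSSol r s)
    (hq : ∀ t, q t ∈ Icc (-1:ℝ) 1) (hr : ∀ t, r t ∈ Icc (-1:ℝ) 1)
    (h0 : q 0 = r 0) (h1 : p 0 = s 0) (t : ℝ) : q t = r t ∧ p t = s t := by
  obtain ⟨K, hK⟩ := g'_lip
  have hl : LipschitzOnWith (max 1 K) (fun z : ℝ × ℝ => (z.2, -(g' z.1)))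
      {z | z.1 ∈ Icc (-1:ℝ) 1} := by
    refine LipschitzOnWith.prodMk ?_ ?_
    · exact LipschitzWith.prod_snd.lipschitzOnWith
    · have := (hK.comp (LipschitzWith.prod_fst.lipschitzOnWith (s := {z : ℝ × ℝ | z.1 ∈ Icc (-1:ℝ) 1}))
        (fun z hz => hz)).neg
      exact (this.weaken (by simp))
  have := ODE_solution_unique_univ (v := fun _ (z : ℝ × ℝ) => (z.2, -(g' z.1)))
    (s := fun _ => {z | z.1 ∈ Icc (-1:ℝ) 1}) (f := fun t => (q t, p t)) (g := fun t => (r t, s t))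
    (t₀ := 0) (fun _ => hl) (fun t => ⟨(h.1 t).prodMk (h.2 t), hq t⟩)
    (fun t => ⟨(k.1 t).prodMk (k.2 t), hr t⟩) (by simp [h0, h1])
  have := congrFun this t
  simpa using this

lemma g_neg (x : ℝ) : g (-x) = g x := by simp [g_eq]
lemma g'_neg (x : ℝ) : g' (-x) = -g' x := by simp [g'_eq]

lemma g_zero : g 0 = 0 := by simp [g]

lemma g_inner {x : ℝ} (hx : x ∈ Icc (0:ℝ) 1) : g x = 1 - (1 - x ^ 2) ^ 4 := by
  unfold g
  rw [if_pos (abs_le.2 ⟨by linarith [hx.1], hx.2⟩)]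

lemma g_mono : StrictMonoOn g (Icc (0:ℝ) 1) := by
  intro x hx y hy hxy
  rw [g_inner hx, g_inner hy]
  have h1 : 1 - y ^ 2 < 1 - x ^ 2 := by nlinarith [hx.1, hy.1]
  have h2 : 0 ≤ 1 - y ^ 2 := by nlinarith [hy.1, hy.2]
  have := pow_lt_pow_left₀ h1 h2 (n := 4) (by norm_num)
  linarith

lemma exists_turn {q p : ℝ → ℝ} (h : IsHSSol q p) {a : ℝ} (ha : 0 < a) (ha1 : a < 1)
    (hq : ∀ t, q t ≤ a) (hq0 : q 0 = 0) (hp0 : 0 < p 0) :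
    ∃ τ, 0 < τ ∧ p τ = 0 ∧ ∀ t ∈ Ico 0 τ, 0 < p t := by
  have hpc : Continuous p := continuous_iff_continuousAt.2 fun t => (h.2 t).continuousAt
  have hqc : Continuous q := continuous_iff_continuousAt.2 fun t => (h.1 t).continuousAt
  have key : ∃ t, 0 ≤ t ∧ p t ≤ 0 := by
    by_contra! hcon
    have hmono : StrictMonoOn q (Ici 0) := by
      apply strictMonoOn_of_deriv_pos (convex_Ici 0) hqc.continuousOn
      intro x hx
      rw [interior_Ici] at hx
      rw [(h.1 x).deriv]
      exact hcon x (le_of_lt hx)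
    set c := q 1 with hc
    have hc0 : 0 < c := by
      rw [hc, ← hq0]; exact hmono (by simp) (by simp) one_pos
    set m := 8 * c * (1 - a ^ 2) ^ 3 with hm
    have ha2 : 0 < 1 - a ^ 2 := by nlinarith
    have hm0 : 0 < m := by positivity
    have hg : ∀ t, 1 ≤ t → m ≤ g' (q t) := by
      intro t ht
      have h1 : c ≤ q t := hmono.monotoneOn (by simp) (by simp; linarith) ht
      have h2 := hq t
      rw [g'_eq, max_eq_left (by nlinarith)]
      have h3 : 1 - a ^ 2 ≤ 1 - q t ^ 2 := by nlinarith
      rw [hm]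
      have h4 : 0 ≤ q t := by linarith
      gcongr
    have hanti : AntitoneOn (fun t => p t + m * t) (Ici 1) := by
      have hd : ∀ x, HasDerivAt (fun t => p t + m * t) (-(g' (q x)) + m) x := by
        intro x
        exact ((h.2 x).add ((hasDerivAt_id x).const_mul m)).congr_deriv (by simp)
      apply antitoneOn_of_deriv_nonpos (convex_Ici 1)
      · exact (by fun_prop : Continuous (fun t => p t + m * t)).continuousOn
      · intro x _
        exact (hd x).differentiableAt.differentiableWithinAt
      · intro x hx
        rw [interior_Ici] at hx
        rw [(hd x).deriv]
        linarith [hg x (le_of_lt hx)]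
    have hp1 := hcon 1 zero_le_one
    have h2 : (1:ℝ) ≤ 1 + p 1 / m := by
      have : 0 < p 1 / m := by positivity
      linarith
    have := hanti (a := 1) (b := 1 + p 1 / m) (by simp) h2 h2
    have h3 := hcon (1 + p 1 / m) (by linarith)
    simp only [mul_add, mul_one] at this
    rw [mul_div_cancel₀ _ hm0.ne'] at this
    linarith
  set S := {t : ℝ | 0 ≤ t ∧ p t ≤ 0} with hS
  have hSc : IsClosed S := by
    exact (isClosed_le continuous_const continuous_id).inter (isClosed_le hpc continuous_const)
  have hbdd : BddBelow S := ⟨0, fun t ht => ht.1⟩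
  have hmem := hSc.csInf_mem key hbdd
  set τ := sInf S with hτ
  have hpos : ∀ t ∈ Ico 0 τ, 0 < p t := by
    intro t ht
    by_contra! hn
    have := csInf_le hbdd (show t ∈ S from ⟨ht.1, hn⟩)
    linarith [ht.2]
  have hτ0 : 0 < τ := by
    rcases hmem.1.lt_or_eq with h1 | h1
    · exact h1
    · have := hmem.2
      rw [← h1] at this
      linarith
  refine ⟨τ, hτ0, le_antisymm hmem.2 ?_, hpos⟩
  have hcl : τ ∈ closure (Ico 0 τ) := by
    rw [closure_Ico hτ0.ne]; exact ⟨hτ0.le, le_rfl⟩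
  have := closure_minimal (s := Ico 0 τ) (t := {t | 0 ≤ p t}) (fun t ht => (hpos t ht).le)
    (isClosed_le continuous_const hpc)
  exact this hcl

lemma main {q p : ℝ → ℝ} (h : IsHSSol q p) {a T p₀ : ℝ} (ha : a ∈ Ioo (0:ℝ) 1)
    (hp : 0 < p₀) (hga : g a = p₀ ^ 2 / 2) (hq0 : q 0 = 0) (hp0 : p 0 = p₀)
    (hT : IsSmallestPeriod q T) :
    T / 2 = 2 * ∫ x in (0:ℝ)..a, 1 / Real.sqrt (p₀ ^ 2 - 2 * g x) := by
  have hE : ∀ t, p t ^ 2 / 2 + g (q t) = p₀ ^ 2 / 2 := by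
    intro t
    rw [energy h t, hq0, hp0, g_zero, add_zero]
  have haI : a ∈ Icc (0:ℝ) 1 := ⟨ha.1.le, ha.2.le⟩
  have ga1 : g a < 1 := by
    have := g_mono haI (show (1:ℝ) ∈ Icc (0:ℝ) 1 by simp) ha.2
    rwa [show g 1 = 1 by simp [g]] at this
  have hgabs : ∀ x, g |x| = g x := by
    intro x
    rcases abs_choice x with h | h <;> rw [h]
    exact g_neg x
  have habs : ∀ t, |q t| ≤ a := by
    intro t
    by_contra! hn
    have h1 : g (q t) ≤ g a := by nlinarith [hE t, sq_nonneg (p t)]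
    by_cases h2 : |q t| ≤ 1
    · have := g_mono haI ⟨abs_nonneg _, h2⟩ hn
      rw [hgabs] at this
      linarith
    · have : g (q t) = 1 := by unfold g; rw [if_neg h2]
      linarith
  have hI : ∀ t, q t ∈ Icc (-1:ℝ) 1 := fun t => abs_le.1 ((habs t).trans ha.2.le)
  obtain ⟨τ, hτ, hpτ, hpos⟩ := exists_turn h ha.1 ha.2 (fun t => (le_abs_self _).trans (habs t))
    hq0 (by rw [hp0]; exact hp)
  have hqc : Continuous q := continuous_iff_continuousAt.2 fun t => (h.1 t).continuousAt
  have hmono : StrictMonoOn q (Icc 0 τ) := by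
    apply strictMonoOn_of_deriv_pos (convex_Icc 0 τ) hqc.continuousOn
    intro x hx
    rw [interior_Icc] at hx
    rw [(h.1 x).deriv]
    exact hpos x ⟨hx.1.le, hx.2⟩
  have h0m : (0:ℝ) ∈ Icc 0 τ := ⟨le_rfl, hτ.le⟩
  have hτm : τ ∈ Icc 0 τ := ⟨hτ.le, le_rfl⟩
  have hqτpos : 0 < q τ := by rw [← hq0]; exact hmono h0m hτm hτ
  have hqτ : q τ = a := by
    have h1 := hE τ
    rw [hpτ] at h1
    apply g_mono.injOn ⟨hqτpos.le, (hI τ).2⟩ haI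
    rw [hga]; linarith
  -- symmetries
  have hodd : ∀ t, q (-t) = - q t := by
    intro t
    have k : IsHSSol (fun t => -q (-t)) (fun t => p (-t)) := by
      constructor
      · intro t
        exact (((h.1 (-t)).comp t (hasDerivAt_neg t)).neg).congr_deriv (by simp)
      · intro t
        have := (h.2 (-t)).comp t (hasDerivAt_neg t)
        simpa [g'_neg, Function.comp_def] using this
    have := (sol_unique h k hI (fun t => by
      have := hI (-t); exact ⟨by linarith [this.2], by linarith [this.1]⟩)
      (by simp [hq0]) (by simp) t).1
    linarith
  have hrefl : ∀ t, q (τ + t) = q (τ - t) ∧ p (τ + t) = -p (τ - t) := by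
    intro t
    have k1 : IsHSSol (fun t => q (τ + t)) (fun t => p (τ + t)) :=
      ⟨fun t => (h.1 (τ + t)).comp_const_add τ t, fun t => (h.2 (τ + t)).comp_const_add τ t⟩
    have k2 : IsHSSol (fun t => q (τ - t)) (fun t => -p (τ - t)) :=
      ⟨fun t => (h.1 (τ - t)).comp_const_sub τ t, fun t => by
        exact (((h.2 (τ - t)).comp_const_sub τ t).neg).congr_deriv (by simp)⟩
    exact sol_unique k1 k2 (fun t => hI _) (fun t => hI _) (by simp) (by simp [hpτ]) t
  have hhalf : ∀ t, q (t + 2 * τ) = - q t := by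
    intro t
    have := (hrefl (t + τ)).1
    rw [show τ + (t + τ) = t + 2 * τ by ring, show τ - (t + τ) = -t by ring, hodd] at this
    exact this
  have hp2 : p (2 * τ) = -p₀ := by
    have := (hrefl τ).2
    rw [show τ + τ = 2 * τ by ring, sub_self, hp0] at this
    exact this
  have hqpos : ∀ t ∈ Ioo 0 (2 * τ), 0 < q t := by
    intro t ht
    have hA : ∀ s, 0 < s → s ≤ τ → 0 < q s := by
      intro s h1 h2
      rw [← hq0]; exact hmono h0m ⟨h1.le, h2⟩ h1
    rcases le_or_gt t τ with h1 | h1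
    · exact hA t ht.1 h1
    · have := (hrefl (t - τ)).1
      rw [show τ + (t - τ) = t by ring] at this
      rw [this]
      exact hA _ (by linarith [ht.2]) (by linarith)
  obtain ⟨hT0, hTp, hTmin⟩ := hT
  have hT4 : T = 4 * τ := by
    refine le_antisymm (hTmin _ (by linarith) ?_) ?_
    · intro t
      rw [show t + 4 * τ = (t + 2 * τ) + 2 * τ by ring, hhalf, hhalf, neg_neg]
    · by_contra! hlt
      have hqT : q T = 0 := by
        have := hTp 0
        rwa [zero_add, hq0] at this
      have hpT : p T = p₀ := by
        have h1 : HasDerivAt q (p T) 0 := by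
          have h2 := (h.1 (0 + T)).comp_add_const 0 T
          rw [show (fun x => q (x + T)) = q from funext hTp, zero_add] at h2
          exact h2
        rw [← hp0]
        exact h1.unique (h.1 0)
      rcases lt_trichotomy T (2 * τ) with h1 | h1 | h1
      · have := hqpos T ⟨hT0, h1⟩
        linarith
      · rw [h1, hp2] at hpT
        linarith
      · have h2 := hqpos (T - 2 * τ) ⟨by linarith, by linarith⟩
        have h3 := hhalf (T - 2 * τ)
        rw [sub_add_cancel] at h3
        linarith
  have himg : q '' Ioo 0 τ = Ioo 0 a := by
    apply Subset.antisymm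
    · rintro _ ⟨t, ht, rfl⟩
      have htm : t ∈ Icc 0 τ := ⟨ht.1.le, ht.2.le⟩
      constructor
      · rw [← hq0]; exact hmono h0m htm ht.1
      · rw [← hqτ]; exact hmono htm hτm ht.2
    · have := intermediate_value_Ioo hτ.le hqc.continuousOn
      rwa [hq0, hqτ] at this
  have hint : ∫ x in (0:ℝ)..a, 1 / Real.sqrt (p₀ ^ 2 - 2 * g x) = τ := by
    rw [intervalIntegral.integral_of_le ha.1.le, integral_Ioc_eq_integral_Ioo, ← himg,
      integral_image_eq_integral_abs_deriv_smul measurableSet_Ioo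
        (fun x _ => (h.1 x).hasDerivWithinAt) (hmono.injOn.mono Ioo_subset_Icc_self)]
    rw [setIntegral_congr_fun (g := fun _ => (1:ℝ)) measurableSet_Ioo]
    · simp [hτ.le]
    · intro t ht
      have h1 := hpos t ⟨ht.1.le, ht.2⟩
      have h2 : p₀ ^ 2 - 2 * g (q t) = p t ^ 2 := by linarith [hE t]
      simp only [h2, Real.sqrt_sq h1.le, abs_of_pos h1, smul_eq_mul]
      field_simp
  rw [hint, hT4]
  ring

theorem stmt_10 (F : ℝ → ℝ → ℝ → ℝ × ℝ) (hF : IsHSFlow F)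
    (T : ℝ → ℝ) (hT : IsPeriodMap F T) :
    ∀ p₀ ∈ Ioo (0:ℝ) (Real.sqrt 2),
      (∃! qt : ℝ, qt ∈ Ioo (0:ℝ) 1 ∧ g qt = p₀ ^ 2 / 2) ∧
      ∀ qt : ℝ, qt ∈ Ioo (0:ℝ) 1 → g qt = p₀ ^ 2 / 2 →
        T p₀ / 2 = 2 * ∫ x in (0:ℝ)..qt, 1 / Real.sqrt (p₀ ^ 2 - 2 * g x) := by
  intro p₀ hp
  constructor
  · have hc : Continuous g := continuous_iff_continuousAt.2 fun t => (g_deriv t).continuousAt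
    have hv := intermediate_value_Ioo (zero_le_one (α := ℝ)) hc.continuousOn
    rw [g_zero, show g 1 = 1 by simp [g]] at hv
    have h2 : p₀ ^ 2 < 2 := (Real.lt_sqrt hp.1.le).1 hp.2
    obtain ⟨a, ha, hga⟩ := hv (show p₀ ^ 2 / 2 ∈ Ioo (0:ℝ) 1 from
      ⟨by have := hp.1; positivity, by linarith⟩)
    refine ⟨a, ⟨ha, hga⟩, ?_⟩
    rintro b ⟨hb, hgb⟩
    exact g_mono.injOn (Ioo_subset_Icc_self hb) (Ioo_subset_Icc_self ha) (hgb.trans hga.symm)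
  · intro a ha hga
    obtain ⟨h, h0⟩ := hF 0 p₀
    exact main h ha hp.1 hga (by simp [h0]) (by simp [h0]) (hT p₀ hp)
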